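/- arXiv:1102.3619 — 2 statements merged into one kernel-verified Lean document; each statement's English description precedes it below -/
import Mathlib

section
/- For every integer b ≥ 1 and every finite set Δ of integers each ≥ b, the b-bipartite system for Δ has exactly one solution (V_{−1}, V_0, …, V_b). -/
open MvPowerSeries in
/-- `V : ℤ → ℚ[[y_s : s ∈ σ]]` (only the values `V_{−1}, …, V_b` are relevant; the variable
`y_s` plays the role of `x_{2·deg s}`) is a solution of the `b`-bipartite system if:
`V_{−1} = 1`; the constant term of `V_j` vanishes for `0 ≤ j ≤ b`; for `−1 ≤ j ≤ b−2`,
`V_j` is the sum over all compositions `(c_1,…,c_r)` of `j+1` into positive parts of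
`V_{c_1}·…·V_{c_r}`; and for `j ∈ {b−1, b}`,
`V_j = Σ_s y_s · C(2·deg s − 1, deg s − j − 1) · (1+V_0)^{deg s + j}`, the binomial
coefficient being interpreted as `0` when `deg s − j − 1 < 0`. -/
def IsBipSystemSolution (b : ℕ) {σ : Type*} [Fintype σ] (deg : σ → ℕ)
    (V : ℤ → MvPowerSeries σ ℚ) : Prop :=
  V (-1) = 1 ∧
  (∀ j : ℤ, 0 ≤ j → j ≤ (b : ℤ) → constantCoeff (σ := σ) (R := ℚ) (V j) = 0) ∧
  (∀ j : ℤ, -1 ≤ j → j ≤ (b : ℤ) - 2 →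
    V j = ∑ c : Composition (j + 1).toNat, ((c.blocks.map (fun k => V (k : ℤ))).prod)) ∧
  (∀ j : ℤ, (b : ℤ) - 1 ≤ j → j ≤ (b : ℤ) →
    V j = ∑ s : σ,
      MvPowerSeries.X s *
        (C (σ := σ) (R := ℚ) (if j + 1 ≤ (deg s : ℤ) then
            (((2 * deg s - 1).choose (deg s - j.toNat - 1) : ℕ) : ℚ) else 0)) *
        (1 + V 0) ^ (deg s + j.toNat))

/-!
Discarding `V_{-1} = 1`, a solution is a family of series without constant term fixed by the map
`bipMap` given by the right-hand sides. The coefficient of degree `n` in the image at index `j`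
only involves coefficients of degree `< n`, except for the term `V_{j+1}` coming from the
composition of `j + 1` with a single part: a product of at least two series without constant term,
or a product with a variable, raises the degree of agreement by one. So each coefficient is
determined by those at smaller `(n, b - j)` in lexicographic order, and well-founded recursion
produces the fixed point.
-/

open Function Set

theorem existsUnique_isFixedPt_of_wellFounded {ι : Type*} {α : ι → Type*} {r : ι → ι → Prop}
    (hr : WellFounded r) {S : ∀ i, Set (α i)} (hS : ∀ i, (S i).Nonempty)
    {F : (∀ i, α i) → ∀ i, α i} (hmaps : MapsTo F (univ.pi S) (univ.pi S))
    (hF : ∀ f ∈ univ.pi S, ∀ g ∈ univ.pi S, ∀ i, (∀ j, r j i → f j = g j) → F f i = F g i) :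
    ∃! f, f ∈ univ.pi S ∧ IsFixedPt F f := by
  classical
  choose a ha using hS
  let cut (f : ∀ i, α i) (i : ι) : ∀ j, α j := fun j => if _ : r j i then f j else a j
  let f : ∀ i, α i := hr.fix fun i ih => F (fun j => if h : r j i then ih j h else a j) i
  have f_eq (i : ι) : f i = F (cut f i) i := hr.fix_eq _ i
  have cut_mem (i : ι) (h : ∀ j, r j i → f j ∈ S j) : cut f i ∈ univ.pi S := by
    intro j _
    by_cases hj : r j i
    · simpa only [cut, dif_pos hj] using h j hj
    · simpa only [cut, dif_neg hj] using ha j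
  have f_mem (i : ι) : f i ∈ S i := by
    induction i using hr.induction with
    | h i ih => exact f_eq i ▸ hmaps (cut_mem i ih) i trivial
  refine ⟨f, ⟨fun i _ => f_mem i, funext fun i => ?_⟩, fun g ⟨hgS, hg⟩ => funext fun i => ?_⟩
  · rw [f_eq i]
    refine hF _ (fun i _ => f_mem i) _ (cut_mem i fun j _ => f_mem j) i fun j hj => ?_
    simp only [cut, dif_pos hj]
  · induction i using hr.induction with
    | h i ih =>
      rw [← congrFun hg i, f_eq i]
      refine hF _ hgS _ (cut_mem i fun j _ => f_mem j) i fun j hj => ?_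
      simp only [cut, dif_pos hj, ih j hj]

theorem list_prod_map_smodEq {A ι : Type*} [CommRing A] {I : Ideal A} {l : List ι} {x y : ι → A}
    (h : ∀ k ∈ l, x k ≡ y k [SMOD I]) : (l.map x).prod ≡ (l.map y).prod [SMOD I] := by
  induction l with
  | nil => rfl
  | cons a t ih =>
    simp only [List.map_cons, List.prod_cons]
    exact (h a List.mem_cons_self).mul (ih fun k hk => h k (List.mem_cons_of_mem a hk))

section OrderIdeal

open MvPowerSeries

variable {σ R : Type*}

section Semiring

variable [Semiring R]

variable (σ R) in
/-- The ideal of power series of order at least `n`. Congruence modulo it is agreement of all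
coefficients of total degree less than `n`. -/
def orderIdeal (n : ℕ) : Ideal (MvPowerSeries σ R) where
  carrier := {f | n ≤ f.order}
  add_mem' hf hg := (le_min hf hg).trans min_order_le_add
  zero_mem' := by simp only [mem_ofPred_eq, order_zero, le_top]
  smul_mem' _ _ hg := (le_add_left hg).trans le_order_mul

theorem mem_orderIdeal_iff {n : ℕ} {f : MvPowerSeries σ R} :
    f ∈ orderIdeal σ R n ↔ ∀ d : σ →₀ ℕ, d.degree < n → coeff d f = 0 :=
  ⟨fun hf _ hd => coeff_of_lt_order ((Nat.cast_lt.2 hd).trans_le hf), nat_le_order⟩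

theorem mem_orderIdeal_one_iff {f : MvPowerSeries σ R} :
    f ∈ orderIdeal σ R 1 ↔ constantCoeff f = 0 := by
  rw [← one_le_order_iff_constCoeff_eq_zero, ← Nat.cast_one]
  rfl

theorem mul_mem_orderIdeal_add {m n : ℕ} {f g : MvPowerSeries σ R}
    (hf : f ∈ orderIdeal σ R m) (hg : g ∈ orderIdeal σ R n) :
    f * g ∈ orderIdeal σ R (m + n) :=
  (Nat.cast_add (R := ℕ∞) m n).le.trans ((add_le_add hf hg).trans le_order_mul)

theorem constantCoeff_list_prod_map_eq_zero {ι : Type*} {l : List ι} (hl : l ≠ [])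
    {V : ι → MvPowerSeries σ R} (hV : ∀ k ∈ l, constantCoeff (V k) = 0) :
    constantCoeff (l.map V).prod = 0 := by
  obtain ⟨a, t, rfl⟩ := List.exists_cons_of_ne_nil hl
  rw [List.map_cons, List.prod_cons, map_mul, hV a List.mem_cons_self, zero_mul]

end Semiring

section Ring

variable [Ring R]

theorem smodEq_orderIdeal_iff {n : ℕ} {f g : MvPowerSeries σ R} :
    f ≡ g [SMOD orderIdeal σ R n] ↔ ∀ d : σ →₀ ℕ, d.degree < n → coeff d f = coeff d g := by
  simp only [SModEq.sub_mem, mem_orderIdeal_iff, map_sub, sub_eq_zero]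

theorem mul_smodEq_orderIdeal_succ {n : ℕ} {f₁ f₂ g₁ g₂ : MvPowerSeries σ R}
    (hf₁ : constantCoeff f₁ = 0) (hg₂ : constantCoeff g₂ = 0)
    (hf : f₁ ≡ f₂ [SMOD orderIdeal σ R n]) (hg : g₁ ≡ g₂ [SMOD orderIdeal σ R n]) :
    f₁ * g₁ ≡ f₂ * g₂ [SMOD orderIdeal σ R (n + 1)] := by
  rw [SModEq.sub_mem] at hf hg ⊢
  have hsplit : f₁ * g₁ - f₂ * g₂ = (f₁ - f₂) * g₂ + f₁ * (g₁ - g₂) := by noncomm_ring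
  have hright := mul_mem_orderIdeal_add (mem_orderIdeal_one_iff.2 hf₁) hg
  rw [hsplit]
  exact add_mem (mul_mem_orderIdeal_add hf (mem_orderIdeal_one_iff.2 hg₂))
    (add_comm 1 n ▸ hright)

theorem existsUnique_isFixedPt_of_smodEq_orderIdeal {ι γ : Type*} [Preorder γ] [WellFoundedLT γ]
    (w : ι → γ) {F : (ι → MvPowerSeries σ R) → ι → MvPowerSeries σ R}
    (hF₀ : ∀ V, (∀ k, constantCoeff (V k) = 0) → ∀ j, constantCoeff (F V j) = 0)
    (hF : ∀ V W, (∀ k, constantCoeff (V k) = 0) → (∀ k, constantCoeff (W k) = 0) →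
      ∀ n j, (∀ k, V k ≡ W k [SMOD orderIdeal σ R n]) →
        (∀ k, w k < w j → V k ≡ W k [SMOD orderIdeal σ R (n + 1)]) →
        F V j ≡ F W j [SMOD orderIdeal σ R (n + 1)]) :
    ∃! V, (∀ j, constantCoeff (V j) = 0) ∧ IsFixedPt F V := by
  let series (f : ι × (σ →₀ ℕ) → R) : ι → MvPowerSeries σ R := curry f
  let coeffs (V : ι → MvPowerSeries σ R) : ι × (σ →₀ ℕ) → R := fun p => coeff p.2 (V p.1)
  let rank (p : ι × (σ →₀ ℕ)) : ℕ ×ₗ γ := toLex (p.2.degree, w p.1)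
  let S (p : ι × (σ →₀ ℕ)) : Set R := {a | p.2 = 0 → a = 0}
  have mem_pi_iff (f : ι × (σ →₀ ℕ) → R) :
      f ∈ univ.pi S ↔ ∀ j, constantCoeff (series f j) = 0 :=
    ⟨fun hf j => hf (j, 0) trivial rfl, by rintro hf ⟨j, d⟩ - rfl; exact hf j⟩
  obtain ⟨f, ⟨hfS, hf⟩, huniq⟩ : ∃! f, f ∈ univ.pi S ∧ IsFixedPt (coeffs ∘ F ∘ series) f := by
    refine existsUnique_isFixedPt_of_wellFounded (S := S)
      (InvImage.wf rank wellFounded_lt) (fun _ => ⟨0, fun _ => rfl⟩)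
      (fun f hf => (mem_pi_iff _).2 (hF₀ _ ((mem_pi_iff f).1 hf))) ?_
    rintro f hf g hg ⟨j, d⟩ hfg
    refine smodEq_orderIdeal_iff.1 (hF (series f) (series g) ((mem_pi_iff f).1 hf)
      ((mem_pi_iff g).1 hg) d.degree j ?_ ?_) d d.degree.lt_succ_self
    · exact fun k => smodEq_orderIdeal_iff.2 fun e he => hfg (k, e) (Prod.Lex.left _ _ he)
    · refine fun k hk => smodEq_orderIdeal_iff.2 fun e he => hfg (k, e) ?_
      exact Prod.Lex.toLex_lt_toLex.2
        ((Nat.lt_succ_iff_lt_or_eq.1 he).imp_right fun heq => ⟨heq, hk⟩)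
  refine ⟨series f, ⟨(mem_pi_iff f).1 hfS, congrArg series hf⟩, fun V ⟨hV, hVF⟩ => ?_⟩
  exact congrArg series (huniq (coeffs V) ⟨(mem_pi_iff _).2 hV, congrArg coeffs hVF⟩)

end Ring

theorem list_prod_map_smodEq_orderIdeal_succ [CommRing R] {ι : Type*} {l : List ι}
    (hl : 2 ≤ l.length) {V W : ι → MvPowerSeries σ R} {n : ℕ}
    (hV : ∀ k ∈ l, constantCoeff (V k) = 0) (hW : ∀ k ∈ l, constantCoeff (W k) = 0)
    (h : ∀ k ∈ l, V k ≡ W k [SMOD orderIdeal σ R n]) :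
    (l.map V).prod ≡ (l.map W).prod [SMOD orderIdeal σ R (n + 1)] := by
  match l, hl with
  | a :: a' :: t, _ =>
    rw [List.map_cons, List.prod_cons, List.map_cons (f := W), List.prod_cons]
    exact mul_smodEq_orderIdeal_succ (hV a List.mem_cons_self)
      (constantCoeff_list_prod_map_eq_zero (List.cons_ne_nil a' t)
        fun k hk => hW k (List.mem_cons_of_mem a hk))
      (h a List.mem_cons_self)
      (list_prod_map_smodEq fun k hk => h k (List.mem_cons_of_mem a hk))

end OrderIdeal

section CompositionSum

/-- The sum of `V c₁ * ⋯ * V cᵣ` over all compositions `(c₁, …, cᵣ)` of `n`. -/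
def compositionSum {A : Type*} [Semiring A] (V : ℕ → A) (n : ℕ) : A :=
  ∑ c : Composition n, (c.blocks.map V).prod

theorem compositionSum_zero {A : Type*} [Semiring A] (V : ℕ → A) : compositionSum V 0 = 1 := by
  have hblocks (c : Composition 0) : c.blocks = [] := c.blocks_eq_nil.2 rfl
  simp [compositionSum, hblocks, composition_card]

theorem compositionSum_congr {A : Type*} [Semiring A] {V W : ℕ → A} {n : ℕ}
    (h : ∀ k ≤ n, V k = W k) : compositionSum V n = compositionSum W n :=
  Finset.sum_congr rfl fun c _ =>
    congrArg List.prod (List.map_congr_left fun k hk => h k (c.blocks_le hk))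

open MvPowerSeries

variable {σ R : Type*} {n : ℕ}

theorem constantCoeff_compositionSum_eq_zero [Semiring R] {V : ℕ → MvPowerSeries σ R} (hn : 0 < n)
    (hV : ∀ k ≤ n, constantCoeff (V k) = 0) : constantCoeff (compositionSum V n) = 0 := by
  rw [compositionSum, map_sum]
  refine Finset.sum_eq_zero fun c _ => ?_
  have hne : c.blocks ≠ [] := c.blocks_eq_nil.not.2 hn.ne'
  exact constantCoeff_list_prod_map_eq_zero hne fun k hk => hV k (c.blocks_le hk)

theorem compositionSum_smodEq_orderIdeal_succ [CommRing R] {V W : ℕ → MvPowerSeries σ R} {m : ℕ}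
    (hn : 0 < n) (hV : ∀ k ≤ n, constantCoeff (V k) = 0)
    (hW : ∀ k ≤ n, constantCoeff (W k) = 0) (h : ∀ k ≤ n, V k ≡ W k [SMOD orderIdeal σ R m])
    (hsucc : V n ≡ W n [SMOD orderIdeal σ R (m + 1)]) :
    compositionSum V n ≡ compositionSum W n [SMOD orderIdeal σ R (m + 1)] := by
  refine SModEq.sum fun c _ => ?_
  have hpos : 0 < c.length := c.length_pos_of_pos hn
  obtain hone | htwo : c.length = 1 ∨ 2 ≤ c.length := by omega
  · rw [(Composition.eq_single_iff_length hn).2 hone, Composition.single_blocks]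
    simpa only [List.map_singleton, List.prod_singleton] using hsucc
  · exact list_prod_map_smodEq_orderIdeal_succ htwo (fun k hk => hV k (c.blocks_le hk))
      (fun k hk => hW k (c.blocks_le hk)) (fun k hk => h k (c.blocks_le hk))

end CompositionSum

section BipMap

open MvPowerSeries

variable {σ R : Type*} [Fintype σ]

section Semiring

variable [Semiring R]

/-- The right-hand side `Σ_s y_s · C(2·deg s − 1, deg s − j − 1) · (1 + f)^(deg s + j)` of the
equations for `V_{b-1}` and `V_b`, as a function of `f = V_0`. The condition `j + 1 ≤ deg s` keeps
the lower argument of the binomial coefficient from being truncated to `0`. -/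
noncomputable def binomialSum (deg : σ → ℕ) (f : MvPowerSeries σ R) (j : ℕ) : MvPowerSeries σ R :=
  ∑ s, X s * C (if j + 1 ≤ deg s then ((2 * deg s - 1).choose (deg s - j - 1) : R) else 0) *
    (1 + f) ^ (deg s + j)

theorem constantCoeff_binomialSum (deg : σ → ℕ) (f : MvPowerSeries σ R) (j : ℕ) :
    constantCoeff (binomialSum deg f j) = 0 := by
  simp [binomialSum]

/-- The right-hand sides of the `b`-bipartite system for `V_0, …, V_b`, as a self-map of
`ℕ`-indexed families. The equations for `V_{b-1}` and `V_b` are continued to all indices `j > b`,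
so that the indices need not be bounded. -/
noncomputable def bipMap (b : ℕ) (deg : σ → ℕ) (V : ℕ → MvPowerSeries σ R) (j : ℕ) :
    MvPowerSeries σ R :=
  if j + 2 ≤ b then compositionSum V (j + 1) else binomialSum deg (V 0) j

variable {b : ℕ} {deg : σ → ℕ} {V W : ℕ → MvPowerSeries σ R}

theorem bipMap_congr (h : ∀ k ≤ b, V k = W k) : bipMap b deg V = bipMap b deg W := by
  funext j
  unfold bipMap
  split_ifs with hj
  · exact compositionSum_congr fun k hk => h k (by omega)
  · rw [h 0 b.zero_le]

theorem constantCoeff_bipMap (hV : ∀ k ≤ b, constantCoeff (V k) = 0) (j : ℕ) :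
    constantCoeff (bipMap b deg V j) = 0 := by
  unfold bipMap
  split_ifs with hj
  · exact constantCoeff_compositionSum_eq_zero j.succ_pos fun k hk => hV k (by omega)
  · exact constantCoeff_binomialSum deg (V 0) j

end Semiring

section CommRing

variable [CommRing R]

theorem binomialSum_smodEq_orderIdeal_succ (deg : σ → ℕ) {f g : MvPowerSeries σ R} {n : ℕ}
    (h : f ≡ g [SMOD orderIdeal σ R n]) (j : ℕ) :
    binomialSum deg f j ≡ binomialSum deg g j [SMOD orderIdeal σ R (n + 1)] := by
  refine SModEq.sum fun s _ => ?_
  have hpow := (SModEq.rfl (x := 1)).add h |>.pow (deg s + j) |> SModEq.sub_mem.1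
  rw [SModEq.sub_mem, mul_assoc, mul_assoc, ← mul_sub, ← mul_sub, add_comm n 1]
  exact mul_mem_orderIdeal_add (mem_orderIdeal_one_iff.2 (constantCoeff_X s))
    (Ideal.mul_mem_left _ _ hpow)

variable {b : ℕ} {deg : σ → ℕ} {V W : ℕ → MvPowerSeries σ R}

theorem bipMap_smodEq_orderIdeal_succ (hV : ∀ k, constantCoeff (V k) = 0)
    (hW : ∀ k, constantCoeff (W k) = 0) {n : ℕ} (j : ℕ)
    (h : ∀ k, V k ≡ W k [SMOD orderIdeal σ R n])
    (hsucc : ∀ k, b - k < b - j → V k ≡ W k [SMOD orderIdeal σ R (n + 1)]) :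
    bipMap b deg V j ≡ bipMap b deg W j [SMOD orderIdeal σ R (n + 1)] := by
  unfold bipMap
  split_ifs with hj
  · exact compositionSum_smodEq_orderIdeal_succ j.succ_pos (fun k _ => hV k) (fun k _ => hW k)
      (fun k _ => h k) (hsucc (j + 1) (by omega))
  · exact binomialSum_smodEq_orderIdeal_succ deg (h 0) j

variable (R b deg) in
theorem existsUnique_isFixedPt_bipMap :
    ∃! V : ℕ → MvPowerSeries σ R, (∀ j, constantCoeff (V j) = 0) ∧ IsFixedPt (bipMap b deg) V :=
  existsUnique_isFixedPt_of_smodEq_orderIdeal (fun j => b - j)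
    (fun _ hV => constantCoeff_bipMap fun k _ => hV k)
    (fun _ _ hV hW _ j => bipMap_smodEq_orderIdeal_succ hV hW j)

end CommRing

end BipMap

section Solution

open MvPowerSeries

variable {σ : Type*} [Fintype σ] {b : ℕ} {deg : σ → ℕ}

-- In `IsBipSystemSolution` the parts are cast to `ℤ` by a monadic bind over the list of blocks.
theorem sum_composition_bind_cast_eq_compositionSum {A : Type*} [Semiring A] (V : ℤ → A) (n : ℕ) :
    ∑ c : Composition n, (c.blocks.map (fun k => V (k : ℤ))).prod =
      compositionSum (fun k : ℕ => V k) n := by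
  simp [compositionSum, ← List.map_eq_flatMap, comp_def]

theorem isBipSystemSolution_iff (hb : 1 ≤ b) {V : ℤ → MvPowerSeries σ ℚ} :
    IsBipSystemSolution b deg V ↔ V (-1) = 1 ∧
      ∀ j : ℕ, j ≤ b → constantCoeff (V j) = 0 ∧ V j = bipMap b deg (fun k => V k) j := by
  simp only [IsBipSystemSolution, sum_composition_bind_cast_eq_compositionSum]
  constructor
  · rintro ⟨hneg, hconst, hcomp, hbinom⟩
    refine ⟨hneg, fun j hj => ⟨hconst j (by omega) (by omega), ?_⟩⟩
    unfold bipMap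
    split_ifs with hjb
    · exact hcomp j (by omega) (by omega)
    · simpa [binomialSum] using hbinom j (by omega) (by omega)
  · rintro ⟨hneg, h⟩
    refine ⟨hneg, fun j hj₀ hj => ?_, fun j hj₁ hj => ?_, fun j hj₁ hj => ?_⟩
    · lift j to ℕ using hj₀
      exact (h j (by omega)).1
    · obtain rfl | hj₀ := hj₁.eq_or_lt
      · simpa [compositionSum_zero] using hneg
      · lift j to ℕ using by omega
        rw [(h j (by omega)).2, bipMap, if_pos (by omega)]
        rfl
    · lift j to ℕ using by omega
      rw [(h j (by omega)).2, bipMap, if_neg (by omega)]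
      simp [binomialSum]

theorem IsBipSystemSolution.isFixedPt_bipMap (hb : 1 ≤ b) {V : ℤ → MvPowerSeries σ ℚ}
    (hV : IsBipSystemSolution b deg V) :
    IsFixedPt (bipMap b deg) (bipMap b deg fun k => V k) :=
  bipMap_congr fun k hk => (((isBipSystemSolution_iff hb).1 hV).2 k hk).2.symm

end Solution

theorem bipSystem_exists_unique_general {σ : Type*} [Fintype σ] (b : ℕ) (hb : 1 ≤ b)
    (deg : σ → ℕ) :
    ∃ V : ℤ → MvPowerSeries σ ℚ, IsBipSystemSolution b deg V ∧
      ∀ V' : ℤ → MvPowerSeries σ ℚ, IsBipSystemSolution b deg V' →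
        ∀ j : ℤ, -1 ≤ j → j ≤ (b : ℤ) → V' j = V j := by
  obtain ⟨W, ⟨hWconst, hWfix⟩, hWuniq⟩ := existsUnique_isFixedPt_bipMap ℚ b deg
  let V : ℤ → MvPowerSeries σ ℚ
    | .ofNat k => W k
    | .negSucc _ => 1
  have hV : IsBipSystemSolution b deg V :=
    (isBipSystemSolution_iff hb).2 ⟨rfl, fun j _ => ⟨hWconst j, (congrFun hWfix j).symm⟩⟩
  refine ⟨V, hV, fun V' hV' j hj₁ hj => ?_⟩
  obtain ⟨hneg, hsys⟩ := (isBipSystemSolution_iff hb).1 hV'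
  have hbipMap : bipMap b deg (fun k => V' k) = W :=
    hWuniq _ ⟨constantCoeff_bipMap fun k hk => (hsys k hk).1, hV'.isFixedPt_bipMap hb⟩
  obtain rfl | hj₀ := hj₁.eq_or_lt
  · exact hneg
  · lift j to ℕ using by omega
    rw [(hsys j (by omega)).2, hbipMap]

/-- For every integer `b ≥ 1` and finite set `Δ` of integers each `≥ b`, the `b`-bipartite
system for `Δ` has exactly one solution `(V_{−1}, V_0, …, V_b)`. -/
theorem bipSystem_exists_unique (b : ℕ) (hb : 1 ≤ b) (Δ : Finset ℕ) (hΔ : ∀ i ∈ Δ, b ≤ i) :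
    ∃ V : ℤ → MvPowerSeries ↥Δ ℚ, IsBipSystemSolution b (fun i : ↥Δ => (i : ℕ)) V ∧
      ∀ V' : ℤ → MvPowerSeries ↥Δ ℚ, IsBipSystemSolution b (fun i : ↥Δ => (i : ℕ)) V' →
        ∀ j : ℤ, -1 ≤ j → j ≤ (b : ℤ) → V' j = V j :=
  bipSystem_exists_unique_general b hb fun i : ↥Δ => (i : ℕ)
end

section
/- Let d ≥ 1 be an integer and let Δ be a finite set of odd integers each ≥ d. Let (W_{−2}, W_{−1}, …, W_d) be the unique solution of the d-system for Δ. Then for every j with −1 ≤ j ≤ d and every monomial ∏_{i∈Δ} x_i^{m_i} of total degree n = Σ_{i∈Δ} m_i, the coefficient of that monomial in W_j is zero unless n ≡ j (mod 2). -/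
open MvPowerSeries in
/-- Solutions of the `d`-system for `Δ` (see the paper): `W_{−2} = 1`; the constant term of
`W_j` vanishes for `−1 ≤ j ≤ d`; for `−2 ≤ j ≤ d−3`, `W_j = h_{j+2}(W_1, …, W_{d−1})`
(sum over compositions of `j+2` into positive parts); and for `d−2 ≤ j ≤ d`,
`W_j = [u^{j+2}] Σ_{i∈Δ} x_i u^i (1 + W_0 + u^{−1}W_{−1} + u^{−2})^{i−1}`, written out as a
sum over pairs `(b,c)` of naturals with `b + 2c = i − j − 2` and `b + c ≤ i − 1`. -/
def IsDSystemSolution (d : ℕ) (Δ : Finset ℕ) (W : ℤ → MvPowerSeries ↥Δ ℚ) : Prop :=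
  W (-2) = 1 ∧
  (∀ j : ℤ, -1 ≤ j → j ≤ (d : ℤ) → constantCoeff (σ := ↥Δ) (R := ℚ) (W j) = 0) ∧
  (∀ j : ℤ, -2 ≤ j → j ≤ (d : ℤ) - 3 →
    W j = ∑ c : Composition (j + 2).toNat, ((c.blocks.map (fun k => W (k : ℤ))).prod)) ∧
  (∀ j : ℤ, (d : ℤ) - 2 ≤ j → j ≤ (d : ℤ) →
    W j = ∑ i ∈ Δ.attach,
      MvPowerSeries.X i *
        ∑ bc ∈ (Finset.range ((i : ℕ) + 1) ×ˢ Finset.range ((i : ℕ) + 1)).filter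
            (fun bc => (bc.1 : ℤ) + 2 * (bc.2 : ℤ) = ((i : ℕ) : ℤ) - j - 2 ∧
              bc.1 + bc.2 ≤ (i : ℕ) - 1),
          (C (σ := ↥Δ) (R := ℚ) ((((i : ℕ) - 1).factorial : ℚ) /
                ((((i : ℕ) - 1 - bc.1 - bc.2).factorial : ℚ) * (bc.1.factorial : ℚ) *
                  (bc.2.factorial : ℚ)))) *
            (1 + W 0) ^ ((i : ℕ) - 1 - bc.1 - bc.2) * (W (-1)) ^ bc.1)

/-!
Induct on the total degree `n`, and for fixed `n` downwards on `j`, with the assertion that the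
coefficients of `W_j` in degrees below `n` obey the parity rule. For `j ≥ d - 2` the factor `x_i`
raises the degree by one, so degree `n` of `W_j` only involves lower degrees of `W_0` and `W_{-1}`,
and `i` odd forces `b ≡ j + 1`. For `j ≤ d - 3` a composition with at least two parts contributes a
product of series without constant term, which again only involves lower degrees of its factors,
while the one-part composition contributes `W_{j+2}`, already treated in degree `n`.
-/

open MvPowerSeries in
/-- `F` is concentrated in degrees of class `p : A`, as far as degrees below `n` are concerned: a
monomial of degree `k < n` occurs in `F` only if `(k : A) = p`. With `A = ZMod 2` this is the parity
rule in truncated form; the truncation lets the rule be proved by induction on `n`. -/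
def HasDegreeClassBelow {σ R A : Type*} [Semiring R] [AddMonoidWithOne A] (n : ℕ) (p : A)
    (F : MvPowerSeries σ R) : Prop :=
  ∀ m : σ →₀ ℕ, m.degree < n → (m.degree : A) ≠ p → coeff m F = 0

namespace HasDegreeClassBelow

open MvPowerSeries

variable {σ R A ι : Type*} [Semiring R] [AddMonoidWithOne A] {n : ℕ} {p q : A}
  {F G : MvPowerSeries σ R}

lemma below_zero (p : A) (F : MvPowerSeries σ R) : HasDegreeClassBelow 0 p F :=
  fun _ hm => absurd hm (Nat.not_lt_zero _)

lemma monomial (n : ℕ) (m : σ →₀ ℕ) (a : R) :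
    HasDegreeClassBelow n (m.degree : A) (monomial m a) :=
  fun _ _ hk => coeff_monomial_ne (fun h => hk (congrArg _ (congrArg _ h))) a

lemma C (n : ℕ) (a : R) : HasDegreeClassBelow n (0 : A) (C a : MvPowerSeries σ R) := by
  simpa using monomial (A := A) n (0 : σ →₀ ℕ) a

lemma one (n : ℕ) : HasDegreeClassBelow n (0 : A) (1 : MvPowerSeries σ R) :=
  C n 1

lemma X (n : ℕ) (i : σ) : HasDegreeClassBelow n (1 : A) (X i : MvPowerSeries σ R) := by
  simpa [MvPowerSeries.X] using monomial (A := A) n (Finsupp.single i 1) (1 : R)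

lemma add (hF : HasDegreeClassBelow n p F) (hG : HasDegreeClassBelow n p G) :
    HasDegreeClassBelow n p (F + G) := fun m hm hp => by
  rw [map_add, hF m hm hp, hG m hm hp, add_zero]

lemma sum {s : Finset ι} {f : ι → MvPowerSeries σ R}
    (hf : ∀ i ∈ s, HasDegreeClassBelow n p (f i)) :
    HasDegreeClassBelow n p (∑ i ∈ s, f i) := fun m hm hp => by
  rw [map_sum]
  exact Finset.sum_eq_zero fun i hi => hf i hi m hm hp

-- A factor of positive order pushes the validity of the rule for the other factor to higher degree.
lemma mul_of_le_order {s t a b : ℕ} (hF : HasDegreeClassBelow s p F)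
    (hG : HasDegreeClassBelow t q G) (ha : a ≤ F.order) (hb : b ≤ G.order)
    (hs : n ≤ s + b) (ht : n ≤ t + a) : HasDegreeClassBelow n (p + q) (F * G) := by
  classical
  intro m hm hpq
  rw [coeff_mul]
  refine Finset.sum_eq_zero fun ⟨k, l⟩ hkl => ?_
  have hdeg : k.degree + l.degree = m.degree := by
    rw [← Finset.HasAntidiagonal.mem_antidiagonal.1 hkl, map_add]
  rcases lt_or_ge k.degree a with hka | hka
  · rw [coeff_of_lt_order ((Nat.cast_lt.2 hka).trans_le ha), zero_mul]
  rcases lt_or_ge l.degree b with hlb | hlb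
  · rw [coeff_of_lt_order ((Nat.cast_lt.2 hlb).trans_le hb), mul_zero]
  by_cases hkp : (k.degree : A) = p
  · have hlq : (l.degree : A) ≠ q := fun hlq => hpq (by rw [← hdeg, Nat.cast_add, hkp, hlq])
    rw [hG l (by lia) hlq, mul_zero]
  · rw [hF k (by lia) hkp, zero_mul]

lemma mul (hF : HasDegreeClassBelow n p F) (hG : HasDegreeClassBelow n q G) :
    HasDegreeClassBelow n (p + q) (F * G) :=
  hF.mul_of_le_order hG (a := 0) (b := 0) zero_le zero_le le_rfl le_rfl

lemma mul_of_constantCoeff_eq_zero (hF : HasDegreeClassBelow n p F)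
    (hG : HasDegreeClassBelow n q G) (hF₀ : constantCoeff F = 0) (hG₀ : constantCoeff G = 0) :
    HasDegreeClassBelow (n + 1) (p + q) (F * G) :=
  hF.mul_of_le_order hG (a := 1) (b := 1) (one_le_order_iff_constCoeff_eq_zero.2 hF₀)
    (one_le_order_iff_constCoeff_eq_zero.2 hG₀) le_rfl le_rfl

lemma X_mul (i : σ) (hF : HasDegreeClassBelow n p F) :
    HasDegreeClassBelow (n + 1) (1 + p) (MvPowerSeries.X i * F) :=
  (X (n + 1) i).mul_of_le_order hF (a := 1) (b := 0)
    (one_le_order_iff_constCoeff_eq_zero.2 (constantCoeff_X i)) zero_le le_rfl le_rfl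

lemma list_prod {f : ι → MvPowerSeries σ R} {g : ι → A} {l : List ι}
    (hf : ∀ i ∈ l, HasDegreeClassBelow n (g i) (f i)) :
    HasDegreeClassBelow n (l.map g).sum (l.map f).prod := by
  induction l with
  | nil => exact one n
  | cons i l ih =>
    rw [List.forall_mem_cons] at hf
    exact hf.1.mul (ih hf.2)

lemma pow (hF : HasDegreeClassBelow n p F) (k : ℕ) : HasDegreeClassBelow n (k • p) (F ^ k) := by
  simpa using list_prod (l := List.replicate k ()) fun _ _ => hF

lemma list_prod_of_constantCoeff_eq_zero {f : ι → MvPowerSeries σ R} {g : ι → A} {l : List ι}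
    (hl : l.length ≠ 1) (hf : ∀ i ∈ l, HasDegreeClassBelow n (g i) (f i))
    (hf₀ : ∀ i ∈ l, constantCoeff (f i) = 0) :
    HasDegreeClassBelow (n + 1) (l.map g).sum (l.map f).prod := by
  match l with
  | [] => exact one (n + 1)
  | [_] => exact absurd rfl hl
  | i :: j :: l =>
    rw [List.forall_mem_cons] at hf hf₀
    have htail₀ : constantCoeff ((j :: l).map f).prod = 0 := by
      rw [List.map_cons, List.prod_cons, map_mul, hf₀.2 j List.mem_cons_self, zero_mul]
    exact hf.1.mul_of_constantCoeff_eq_zero (list_prod hf.2) hf₀.1 htail₀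

end HasDegreeClassBelow

namespace IsDSystemSolution

variable {d : ℕ} {Δ : Finset ℕ} {W : ℤ → MvPowerSeries ↥Δ ℚ} {n : ℕ}

-- In `IsDSystemSolution` the list of blocks is itself coerced to a `List ℤ`, by a monadic bind;
-- here the coercion is applied to each block.
lemma eq_sum_composition {j : ℤ} (hW : IsDSystemSolution d Δ W) (hj : -2 ≤ j) (hjd : j ≤ d - 3) :
    W j = ∑ c : Composition (j + 2).toNat, (c.blocks.map fun k : ℕ => W k).prod := by
  simpa [← List.map_eq_flatMap, Function.comp_def] using hW.2.2.1 j hj hjd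

lemma hasDegreeClassBelow_succ_of_sub_two_le {j : ℤ} (hW : IsDSystemSolution d Δ W)
    (hΔ : ∀ i ∈ Δ, Odd i)
    (ih : ∀ k : ℤ, -1 ≤ k → k ≤ d → HasDegreeClassBelow n (k : ZMod 2) (W k))
    (hdj : d - 2 ≤ j) (hjd : j ≤ d) :
    HasDegreeClassBelow (n + 1) (j : ZMod 2) (W j) := by
  rw [hW.2.2.2 j hdj hjd]
  refine .sum fun i _ => ?_
  rw [show (j : ZMod 2) = 1 + (j + 1) by rw [add_comm, CharTwo.add_cancel_right]]
  refine .X_mul i (.sum fun ⟨b, c⟩ hbc => ?_)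
  obtain ⟨-, hbc, -⟩ := Finset.mem_filter.1 hbc
  have hb_parity : b • ((-1 : ℤ) : ZMod 2) = j + 1 := by
    obtain ⟨t, ht⟩ := hΔ i i.2
    have hb : (b : ℤ) = j + 1 + 2 * (t - c - j - 1) := by lia
    have hb' := congrArg (Int.cast : ℤ → ZMod 2) hb
    simpa [CharTwo.neg_eq, CharTwo.two_eq_zero] using hb'
  have hW₀ : HasDegreeClassBelow n (0 : ZMod 2) (1 + W 0) :=
    (HasDegreeClassBelow.one n).add (by simpa using ih 0 (by lia) (by lia))
  have hW₁ := (ih (-1) le_rfl (by lia)).pow b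
  rw [hb_parity] at hW₁
  simpa using ((HasDegreeClassBelow.C n _).mul (hW₀.pow _)).mul hW₁

lemma hasDegreeClassBelow_succ_of_le_sub_three {j : ℤ} (hW : IsDSystemSolution d Δ W)
    (ih : ∀ k : ℤ, -1 ≤ k → k ≤ d → HasDegreeClassBelow n (k : ZMod 2) (W k))
    (hj : -1 ≤ j) (hjd : j ≤ d - 3)
    (hW_add_two : HasDegreeClassBelow (n + 1) ((j + 2 : ℤ) : ZMod 2) (W (j + 2))) :
    HasDegreeClassBelow (n + 1) (j : ZMod 2) (W j) := by
  have hj_toNat : ((j + 2).toNat : ℤ) = j + 2 := Int.toNat_of_nonneg (by lia)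
  have hj_parity : ((j + 2 : ℤ) : ZMod 2) = j := by
    simp [CharTwo.two_eq_zero]
  rw [hW.eq_sum_composition (by lia) hjd]
  refine .sum fun c _ => ?_
  have hblocks_parity : (c.blocks.map fun k : ℕ => (k : ZMod 2)).sum = j := by
    rw [← Nat.cast_list_sum, c.blocks_sum, ← Int.cast_natCast, hj_toNat, hj_parity]
  have hblock_le : ∀ k ∈ c.blocks, (k : ℤ) ≤ d := fun k hk => by
    have := c.blocks_le hk
    lia
  by_cases hlen : c.blocks.length = 1
  · obtain ⟨k, hk⟩ := List.length_eq_one_iff.1 hlen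
    have hk_eq : (k : ℤ) = j + 2 := by
      rw [← hj_toNat, ← c.blocks_sum, hk, List.sum_singleton]
    rw [hk, List.map_singleton, List.prod_singleton, hk_eq, ← hj_parity]
    exact hW_add_two
  · rw [← hblocks_parity]
    exact .list_prod_of_constantCoeff_eq_zero hlen
      (fun k hk => by simpa using ih k (by lia) (hblock_le k hk))
      (fun k hk => hW.2.1 k (by lia) (hblock_le k hk))

lemma hasDegreeClassBelow_succ {j : ℤ} (hW : IsDSystemSolution d Δ W) (hΔ : ∀ i ∈ Δ, Odd i)
    (ih : ∀ k : ℤ, -1 ≤ k → k ≤ d → HasDegreeClassBelow n (k : ZMod 2) (W k))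
    (hj : -1 ≤ j) (hjd : j ≤ d) :
    HasDegreeClassBelow (n + 1) (j : ZMod 2) (W j) := by
  rcases lt_or_ge j (d - 2) with hlow | hhigh
  · exact hW.hasDegreeClassBelow_succ_of_le_sub_three ih hj (by lia)
      (hW.hasDegreeClassBelow_succ hΔ ih (by lia) (by lia))
  · exact hW.hasDegreeClassBelow_succ_of_sub_two_le hΔ ih hhigh hjd
termination_by (d - j).toNat

lemma hasDegreeClassBelow (hW : IsDSystemSolution d Δ W) (hΔ : ∀ i ∈ Δ, Odd i) (n : ℕ) :
    ∀ j : ℤ, -1 ≤ j → j ≤ d → HasDegreeClassBelow n (j : ZMod 2) (W j) := by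
  induction n with
  | zero => exact fun j _ _ => .below_zero _ (W j)
  | succ n ih => exact fun j hj hjd => hW.hasDegreeClassBelow_succ hΔ ih hj hjd

end IsDSystemSolution

theorem dSystem_odd_periodicity_general (d : ℕ) (Δ : Finset ℕ) (hΔ : ∀ i ∈ Δ, Odd i)
    (W : ℤ → MvPowerSeries ↥Δ ℚ) (hW : IsDSystemSolution d Δ W) :
    ∀ j : ℤ, -1 ≤ j → j ≤ (d : ℤ) → ∀ m : ↥Δ →₀ ℕ,
      ¬ (((m.sum fun _ e => e : ℕ) : ℤ) % 2 = j % 2) →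
        MvPowerSeries.coeff (R := ℚ) m (W j) = 0 := by
  intro j hj hjd m hm
  refine hW.hasDegreeClassBelow hΔ (m.degree + 1) j hj hjd m (Nat.lt_succ_self _) fun hdeg => hm ?_
  rw [← Int.cast_natCast] at hdeg
  exact (ZMod.intCast_eq_intCast_iff' _ _ 2).1 hdeg

/-- For `d ≥ 1` and `Δ` a finite set of **odd** integers each `≥ d`, the (unique) solution
`(W_{−2}, …, W_d)` of the `d`-system for `Δ` is periodic: for `−1 ≤ j ≤ d` and every
monomial `∏_{i∈Δ} x_i^{m_i}` of total degree `n = Σ m_i`, the coefficient of that monomial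
in `W_j` is zero unless `n ≡ j (mod 2)`. -/
theorem dSystem_odd_periodicity (d : ℕ) (hd : 1 ≤ d) (Δ : Finset ℕ)
    (hΔ : ∀ i ∈ Δ, d ≤ i ∧ Odd i)
    (W : ℤ → MvPowerSeries ↥Δ ℚ) (hW : IsDSystemSolution d Δ W) :
    ∀ j : ℤ, -1 ≤ j → j ≤ (d : ℤ) → ∀ m : ↥Δ →₀ ℕ,
      ¬ (((m.sum fun _ e => e : ℕ) : ℤ) % 2 = j % 2) →
        MvPowerSeries.coeff (R := ℚ) m (W j) = 0 :=
  dSystem_odd_periodicity_general d Δ (fun i hi => (hΔ i hi).2) W hW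
end
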